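/- For every real σ > 1 and every real η > 0, the series Σ_{k=1}^{∞} −ζ'(σ+2kη)/ζ(σ+2kη) converges and satisfies the strict inequality Σ_{k=1}^{∞} −ζ'(σ+2kη)/ζ(σ+2kη) < log ζ(σ+η) / (2η). -/

import Mathlib

open ArithmeticFunction in
lemma aux_A {s : ℝ} (hs : 1 < s) :
    -(deriv riemannZeta (s : ℂ) / riemannZeta (s : ℂ)).re
      = ∑' n : ℕ, vonMangoldt n * (n : ℝ) ^ (-s) := by
  have h := LSeries_vonMangoldt_eq_deriv_riemannZeta_div (s := (s : ℂ)) (by simpa using hs)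
  rw [← Complex.neg_re, ← neg_div, ← h, LSeries_def₀ (by simp)]
  have h2 : (∑' n : ℕ, ((vonMangoldt n : ℝ) : ℂ) * (n : ℂ) ^ (-(s : ℂ)))
      = ((∑' n : ℕ, vonMangoldt n * (n : ℝ) ^ (-s) : ℝ) : ℂ) := by
    push_cast
    refine tsum_congr fun n => ?_
    rw [Complex.ofReal_cpow (by positivity)]
    simp
  have h3 : (∑' n : ℕ, ((vonMangoldt n : ℝ) : ℂ) / (n : ℂ) ^ (s : ℂ))
      = ∑' n : ℕ, ((vonMangoldt n : ℝ) : ℂ) * (n : ℂ) ^ (-(s : ℂ)) := by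
    refine tsum_congr fun n => ?_
    rw [Complex.cpow_neg, div_eq_mul_inv]
  first
  | (rw [h2]; exact Complex.ofReal_re _)
  | (rw [h3, h2]; exact Complex.ofReal_re _)

open ArithmeticFunction in
lemma aux_B {s : ℝ} (hs : 1 < s) :
    Summable (fun n : ℕ => vonMangoldt n / ((n : ℝ) ^ s * Real.log n)) := by
  refine Summable.of_nonneg_of_le (fun n => ?_) (fun n => ?_)
    ((Real.summable_nat_rpow (p := -s)).2 (by linarith))
  · exact div_nonneg vonMangoldt_nonneg
      (mul_nonneg (by positivity) (Real.log_natCast_nonneg n))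
  · rcases lt_or_ge 1 n with hn | hn
    · have h1 : 0 < Real.log n := Real.log_pos (by exact_mod_cast hn)
      have h0 : (0 : ℝ) < n := by exact_mod_cast (by omega : 0 < n)
      have h2 : 0 < (n : ℝ) ^ s := by positivity
      rw [Real.rpow_neg h0.le, div_le_iff₀ (by positivity)]
      rw [inv_mul_cancel_left₀ h2.ne']
      exact vonMangoldt_le_log
    · have : Real.log n = 0 := by
        interval_cases n <;> simp
      rw [this]; simp; positivity

lemma aux_C (σ η : ℝ) (hη : 0 < η) {n : ℕ} (hn : 1 < n) :
    Summable (fun k : ℕ => (n : ℝ) ^ (-(σ + 2 * (k + 1) * η))) ∧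
    ∑' k : ℕ, (n : ℝ) ^ (-(σ + 2 * (k + 1) * η))
      < 1 / ((n : ℝ) ^ (σ + η) * Real.log n) / (2 * η) := by
  have hL : 0 < Real.log n := Real.log_pos (by exact_mod_cast hn)
  have h0 : (0 : ℝ) < n := by exact_mod_cast (by omega : 0 < n)
  set L := Real.log n with hLdef
  set x := η * L with hx
  have hxpos : 0 < x := by positivity
  have hr1 : Real.exp (-(2 * x)) < 1 := by
    rw [Real.exp_lt_one_iff]; linarith
  have hs : HasSum (fun k : ℕ => (n : ℝ) ^ (-(σ + 2 * (k + 1) * η)))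
      (Real.exp (-(L * σ) - 2 * x) * (1 - Real.exp (-(2 * x)))⁻¹) := by
    have := (hasSum_geometric_of_lt_one (Real.exp_pos _).le hr1).mul_left
      (Real.exp (-(L * σ) - 2 * x))
    refine this.congr_fun ?_ <;> intro k
    rw [Real.rpow_def_of_pos h0, ← Real.exp_nat_mul, ← Real.exp_add]
    congr 1
    simp only [hx, ← hLdef]; ring
  refine ⟨hs.summable, ?_⟩
  rw [hs.tsum_eq, Real.rpow_def_of_pos h0, ← hLdef]
  have hsinh : x < Real.sinh x := Real.self_lt_sinh_iff.2 hxpos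
  rw [Real.sinh_eq] at hsinh
  have e1 : Real.exp (-(L * σ) - 2 * x) = Real.exp (-(L * σ)) * (Real.exp (-x) * Real.exp (-x)) := by
    rw [← Real.exp_add, ← Real.exp_add]; congr 1; ring
  have e2 : Real.exp (-(2 * x)) = Real.exp (-x) * Real.exp (-x) := by
    rw [← Real.exp_add]; congr 1; ring
  have e3 : Real.exp (L * (σ + η)) = (Real.exp (-(L * σ)))⁻¹ * (Real.exp (-x))⁻¹ := by
    rw [← Real.exp_neg, ← Real.exp_neg, ← Real.exp_add]; congr 1; rw [hx]; ring
  have e4 : Real.exp x = (Real.exp (-x))⁻¹ := by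
    rw [← Real.exp_neg, neg_neg]
  rw [e4] at hsinh
  rw [e2] at hr1
  rw [e1, e2, e3]
  have hA := Real.exp_pos (-(L * σ))
  have hE := Real.exp_pos (-x)
  generalize Real.exp (-(L * σ)) = A at *
  generalize Real.exp (-x) = E at *
  have hR : 1 / (A⁻¹ * E⁻¹ * L) / (2 * η) = A * E / (2 * x) := by
    rw [hx]; field_simp
  have hD : 0 < 1 - E * E := by linarith
  rw [hR, ← div_eq_mul_inv, div_lt_div_iff₀ hD (by positivity)]
  have h5 : 2 * x * E < 1 - E * E := by
    have := mul_lt_mul_of_pos_right hsinh hE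
    rw [sub_div, sub_mul, div_mul_eq_mul_div, inv_mul_cancel₀ hE.ne'] at this
    nlinarith
  have := mul_lt_mul_of_pos_left h5 (mul_pos hA hE)
  nlinarith


/-- For every real `σ > 1` and every real `η > 0`, the series
`Σ_{k≥1} −ζ'(σ+2kη)/ζ(σ+2kη)` converges and is strictly less than
`log ζ(σ+η) / (2η)`.  (For real arguments `> 1` the values of `ζ` and `ζ'` are real,
so we take real parts.) -/
theorem stmt_6 (σ η : ℝ) (hσ : 1 < σ) (hη : 0 < η) :
    Summable (fun k : ℕ =>
      -(deriv riemannZeta ((σ : ℂ) + 2 * (k + 1 : ℕ) * η) /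
          riemannZeta ((σ : ℂ) + 2 * (k + 1 : ℕ) * η)).re) ∧
    ∑' k : ℕ,
        -(deriv riemannZeta ((σ : ℂ) + 2 * (k + 1 : ℕ) * η) /
            riemannZeta ((σ : ℂ) + 2 * (k + 1 : ℕ) * η)).re <
      Real.log (riemannZeta ((σ : ℂ) + η)).re / (2 * η) := by
  have hcast : ∀ k : ℕ, ((σ : ℂ) + 2 * (k + 1 : ℕ) * η) = ((σ + 2 * (k + 1) * η : ℝ) : ℂ) := by
    intro k; push_cast; ring
  have hgt : ∀ k : ℕ, 1 < σ + 2 * ((k : ℝ) + 1) * η := fun k => by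
    have : 0 < 2 * ((k : ℝ) + 1) * η := by positivity
    linarith
  have hterm : ∀ k : ℕ, -(deriv riemannZeta ((σ : ℂ) + 2 * (k + 1 : ℕ) * η) /
          riemannZeta ((σ : ℂ) + 2 * (k + 1 : ℕ) * η)).re
      = ∑' n : ℕ, ArithmeticFunction.vonMangoldt n * (n : ℝ) ^ (-(σ + 2 * ((k : ℝ) + 1) * η)) := by
    intro k
    rw [hcast k]
    exact aux_A (hgt k)
  simp only [hterm]
  have hlog := log_riemannZeta_eq (s := σ + η) (by linarith)
  rw [Complex.ofReal_add] at hlog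
  rw [hlog, ← tsum_div_const]
  have hB := (aux_B (s := σ + η) (by linarith)).div_const (2 * η)
  have hΛ : ∀ n : ℕ, n ≤ 1 → ArithmeticFunction.vonMangoldt n = 0 := by
    intro n hn
    interval_cases n <;> simp
  set F : ℕ × ℕ → ℝ := fun p =>
    ArithmeticFunction.vonMangoldt p.1 * (p.1 : ℝ) ^ (-(σ + 2 * ((p.2 : ℝ) + 1) * η)) with hF
  have hF0 : 0 ≤ F := fun p =>
    mul_nonneg ArithmeticFunction.vonMangoldt_nonneg (by positivity)
  have hrow : ∀ n : ℕ, Summable fun k => F (n, k) := by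
    intro n
    rcases lt_or_ge 1 n with hn | hn
    · have h := (aux_C σ η hη hn).1.mul_left (ArithmeticFunction.vonMangoldt n)
      simpa only [hF] using h
    · simp [hF, hΛ n hn, summable_zero]
  have heq : ∀ n : ℕ, ArithmeticFunction.vonMangoldt n / ((n : ℝ) ^ (σ + η) * Real.log n) / (2 * η)
      = ArithmeticFunction.vonMangoldt n * (1 / ((n : ℝ) ^ (σ + η) * Real.log n) / (2 * η)) := by
    intro n; ring
  have hle : ∀ n : ℕ, ∑' k, F (n, k) ≤
      ArithmeticFunction.vonMangoldt n / ((n : ℝ) ^ (σ + η) * Real.log n) / (2 * η) := by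
    intro n
    rcases lt_or_ge 1 n with hn | hn
    · rw [heq]
      simp only [hF, tsum_mul_left]
      exact mul_le_mul_of_nonneg_left (aux_C σ η hη hn).2.le ArithmeticFunction.vonMangoldt_nonneg
    · simp [hF, hΛ n hn]
  have hlt : ∑' k, F (2, k) <
      ArithmeticFunction.vonMangoldt 2 / (((2 : ℕ) : ℝ) ^ (σ + η) * Real.log (2 : ℕ)) / (2 * η) := by
    rw [heq]
    simp only [hF, tsum_mul_left]
    refine mul_lt_mul_of_pos_left (aux_C σ η hη (n := 2) (by norm_num)).2 ?_
    rw [ArithmeticFunction.vonMangoldt_apply_prime Nat.prime_two]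
    exact Real.log_pos (by norm_num)
  have hrow0 : ∀ n : ℕ, 0 ≤ ∑' k, F (n, k) := fun n => tsum_nonneg fun k => hF0 _
  have hsumF : Summable F := (summable_prod_of_nonneg hF0).2
    ⟨hrow, Summable.of_nonneg_of_le hrow0 hle hB⟩
  refine ⟨hsumF.prod_symm.prod, ?_⟩
  have hcomm : ∑' (k : ℕ) (n : ℕ), F (n, k) = ∑' (n : ℕ) (k : ℕ), F (n, k) :=
    (Summable.tsum_comm (f := fun n k => F (n, k)) hsumF)
  calc _ = ∑' (k : ℕ) (n : ℕ), F (n, k) := rfl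
    _ = ∑' (n : ℕ) (k : ℕ), F (n, k) := hcomm
    _ < _ := Summable.tsum_lt_tsum_of_nonneg hrow0 hle hlt hB
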